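/- Let N be a lattice of rank d and let U ⊆ N_ℝ be a convex set of the form U = conv(F) + σ₀, where F ⊆ N_ℝ is a finite set and σ₀ is the convex cone generated by finitely many elements of N. Let l = d − dim(σ₀ − σ₀) and suppose l ≥ 1. Let t > 0 and suppose N ∩ int(tU) = ∅. Then there exists a surjective ℤ-linear map φ : N → ℤ such that φ_ℝ(U) ⊆ ℝ is a bounded interval of length at most l²/t. -/

import Mathlib

open Pointwise

/-- The lattice `ℤ^d` viewed inside its realification `ℝ^d`
(a model of an arbitrary lattice of rank `d`). -/
def intPts (d : ℕ) : Set (Fin d → ℝ) := {x | ∀ i, ∃ n : ℤ, x i = (n : ℝ)}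

/-- The convex cone generated by a set `s`: all finite nonnegative linear
combinations of elements of `s`. -/
def coneHull {V : Type*} [AddCommGroup V] [Module ℝ V] (s : Set V) : Set V :=
  {x | ∃ (n : ℕ) (c : Fin n → ℝ) (v : Fin n → V),
    (∀ i, 0 ≤ c i) ∧ (∀ i, v i ∈ s) ∧ x = ∑ i, c i • v i}

/-!
The linear span of `σ₀` is rational, so the lattice splits along it and projecting along it gives a
surjection `ℤ^d → ℤ^l`. A lattice point in the interior of the projection of `tU` lies below a
simplex in `t conv(F) + span σ₀`, and translating that simplex by a lattice point far inside `σ₀`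
moves it into `tU`; hence the projection of `t conv(F)` is a bounded convex set without lattice
points in its interior, and it remains to bound its lattice width by `l²`.

A convex body lies between an ellipsoid of maximal volume and its concentric dilate by `l` (John).
If the width exceeded `l²`, every nonzero vector of the lattice dual to the ellipsoid would be
longer than `l/2`. Comparing Gaussian theta series at two scales on both sides of the Poisson
summation formula (Banaszczyk) then shows that every translate of the ellipsoid contains a lattice
point.

For a compact convex set with empty interior the same argument applies to its thickenings, and shows
that its integral translates cover the space, which Baire's theorem forbids.
-/

section IntegralVectors

open MeasureTheory
open scoped InnerProductSpace

variable {ι : Type*}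

/-- The integral vectors of `ℝ^ι`, with its Euclidean structure. -/
def intVec (x : ι → ℤ) : EuclideanSpace ℝ ι := WithLp.toLp 2 fun i => (x i : ℝ)

@[simp] lemma intVec_apply (x : ι → ℤ) (i : ι) : intVec x i = x i := rfl

@[simp] lemma intVec_zero : intVec (0 : ι → ℤ) = 0 := by
  ext i; simp

lemma intVec_add (x y : ι → ℤ) : intVec (x + y) = intVec x + intVec y := by
  ext i; simp

lemma intVec_injective : Function.Injective (intVec : (ι → ℤ) → EuclideanSpace ℝ ι) := by
  intro x y h
  ext i
  simpa using congrArg (fun v : EuclideanSpace ℝ ι => v i) h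

/-- The half-open unit cell, a fundamental domain for the translations by integral vectors. -/
def unitCell (ι : Type*) : Set (EuclideanSpace ℝ ι) := {v | ∀ i, v i ∈ Set.Ioc (0 : ℝ) 1}

lemma iUnion_vadd_unitCell : ⋃ x : ι → ℤ, (intVec x +ᵥ unitCell ι) = Set.univ := by
  refine Set.eq_univ_of_forall fun v => Set.mem_iUnion.2 ⟨fun i => ⌈v i⌉ - 1, ?_⟩
  refine Set.mem_vadd_set_iff_neg_vadd_mem.2 fun i => ?_
  have hlt := Int.ceil_lt_add_one (v i)
  have hle := Int.le_ceil (v i)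
  simp only [vadd_eq_add, PiLp.add_apply, PiLp.neg_apply, intVec_apply, Int.cast_sub, Int.cast_one]
  constructor <;> linarith

lemma pairwise_disjoint_vadd_unitCell :
    Pairwise (Function.onFun Disjoint fun x : ι → ℤ => intVec x +ᵥ unitCell ι) := by
  refine fun x y hxy => Set.disjoint_left.2 fun v hx hy => hxy (funext fun i => ?_)
  have hxi := Set.mem_vadd_set_iff_neg_vadd_mem.1 hx i
  have hyi := Set.mem_vadd_set_iff_neg_vadd_mem.1 hy i
  simp only [vadd_eq_add, PiLp.add_apply, PiLp.neg_apply, intVec_apply, Set.mem_Ioc] at hxi hyi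
  have hlt : (x i : ℝ) < y i + 1 := by linarith
  have hgt : (y i : ℝ) < x i + 1 := by linarith
  norm_cast at hlt hgt
  omega

lemma measurableSet_unitCell [Finite ι] : MeasurableSet (unitCell ι) := by
  have : unitCell ι = ⋂ i, (fun v : EuclideanSpace ℝ ι => v i) ⁻¹' Set.Ioc (0 : ℝ) 1 := by
    ext v; simp [unitCell]
  rw [this]
  exact MeasurableSet.iInter fun i => measurableSet_Ioc.preimage (by fun_prop)

lemma isBounded_unitCell [Finite ι] : Bornology.IsBounded (unitCell ι) := by
  cases nonempty_fintype ι
  have h := (PiLp.antilipschitzWith_ofLp 2 fun _ : ι => ℝ).isBounded_preimage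
    (Metric.isBounded_Icc (0 : ι → ℝ) 1)
  exact h.subset fun v hv => ⟨fun i => (hv i).1.le, fun i => (hv i).2⟩

variable [Fintype ι]

lemma inner_intVec (y : ι → ℤ) (v : EuclideanSpace ℝ ι) :
    ⟪intVec y, v⟫_ℝ = ∑ i, (y i : ℝ) * v i := by
  simp [PiLp.inner_apply, mul_comm]

lemma hasSum_setIntegral_unitCell {F : Type*} [NormedAddCommGroup F] [NormedSpace ℝ F]
    {f : EuclideanSpace ℝ ι → F} (hf : Integrable f) :
    HasSum (fun x : ι → ℤ => ∫ v in unitCell ι, f (v + intVec x)) (∫ v, f v) := by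
  have h := hasSum_integral_iUnion (f := f) (μ := volume)
    (fun x : ι → ℤ => measurableSet_unitCell.const_vadd (intVec x))
    pairwise_disjoint_vadd_unitCell hf.integrableOn
  rw [iUnion_vadd_unitCell, Measure.restrict_univ] at h
  convert h using 2 with x
  have hcell : (intVec x + ·) ⁻¹' (intVec x +ᵥ unitCell ι) = unitCell ι :=
    (Set.preimage_vadd (intVec x) _).trans (neg_vadd_vadd _ _)
  have hx := (measurePreserving_add_left volume (intVec x)).setIntegral_preimage_emb
    (MeasurableEquiv.addLeft (intVec x)).measurableEmbedding f (intVec x +ᵥ unitCell ι)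
  rw [hcell] at hx
  simpa only [add_comm] using hx

end IntegralVectors

section PoissonSummation

open MeasureTheory TopologicalSpace Topology
open scoped InnerProductSpace FourierTransform

variable {ι F : Type*} [Fintype ι] [NormedAddCommGroup F]

lemma norm_apply_add_le_norm_restrict {X : Type*} [TopologicalSpace X] [AddGroup X]
    [ContinuousAdd X] (g : C(X, F)) (K : Compacts X) (a : X) {v : X} (hv : v ∈ K) :
    ‖g (v + a)‖ ≤ ‖(g.comp (ContinuousMap.addRight a)).restrict K‖ :=
  ContinuousMap.norm_coe_le_norm (α := (K : Set X))
    ((g.comp (ContinuousMap.addRight a)).restrict K) ⟨v, hv⟩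

/-- The integral translates of `g` are summable, uniformly on compact sets. -/
def HasSummableTranslates (g : C(EuclideanSpace ℝ ι, F)) : Prop :=
  ∀ K : Compacts (EuclideanSpace ℝ ι),
    Summable fun x : ι → ℤ => ‖(g.comp (ContinuousMap.addRight (intVec x))).restrict K‖

namespace HasSummableTranslates

variable {g : C(EuclideanSpace ℝ ι, F)}

lemma mono {F' : Type*} [NormedAddCommGroup F'] {h : C(EuclideanSpace ℝ ι, F')}
    (hg : HasSummableTranslates g) (hle : ∀ v, ‖h v‖ ≤ ‖g v‖) : HasSummableTranslates h :=
  fun K => (hg K).of_nonneg_of_le (fun _ => norm_nonneg _) fun _ =>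
    (ContinuousMap.norm_le _ (norm_nonneg _)).2 fun v => (hle _).trans
      (norm_apply_add_le_norm_restrict g K _ v.2)

variable [CompleteSpace F]

lemma hasSum (hg : HasSummableTranslates g) (u : EuclideanSpace ℝ ι) :
    HasSum (fun x => g (u + intVec x))
      ((∑' x : ι → ℤ, g.comp (ContinuousMap.addRight (intVec x))) u) :=
  ContinuousMap.hasSum_apply (ContinuousMap.summable_of_locally_summable_norm hg).hasSum u

lemma continuous_tsum (hg : HasSummableTranslates g) :
    Continuous fun u => ∑' x, g (u + intVec x) := by
  simp_rw [(hg.hasSum _).tsum_eq]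
  exact map_continuous _

omit [CompleteSpace F] in
lemma integrable (hg : HasSummableTranslates g) : Integrable g := by
  let K : Compacts (EuclideanSpace ℝ ι) := ⟨_, isBounded_unitCell.isCompact_closure⟩
  let T (x : ι → ℤ) : Compacts (EuclideanSpace ℝ ι) :=
    ⟨intVec x +ᵥ (K : Set (EuclideanSpace ℝ ι)), K.isCompact.vadd _⟩
  have hvol (x : ι → ℤ) : volume.real (T x : Set (EuclideanSpace ℝ ι)) =
      volume.real (K : Set (EuclideanSpace ℝ ι)) := congrArg ENNReal.toReal (measure_vadd _ _ _)
  refine integrable_of_summable_norm_restrict (s := T) ?_ ?_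
  · simp_rw [hvol]
    refine ((hg K).of_nonneg_of_le (fun _ => norm_nonneg _) fun x => ?_).mul_right _
    refine (ContinuousMap.norm_le _ (norm_nonneg _)).2 fun ⟨v, w, hw, hv⟩ => ?_
    obtain rfl : w + intVec x = v := (add_comm _ _).trans hv
    exact norm_apply_add_le_norm_restrict g K _ hw
  · refine Set.eq_univ_of_univ_subset (iUnion_vadd_unitCell.symm.subset.trans ?_)
    exact Set.iUnion_mono fun x => Set.vadd_set_mono subset_closure

variable [NormedSpace ℝ F]

lemma setIntegral_unitCell_tsum (hg : HasSummableTranslates g) :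
    ∫ v in unitCell ι, ∑' x, g (v + intVec x) = ∫ v, g v := by
  let K : Compacts (EuclideanSpace ℝ ι) := ⟨_, isBounded_unitCell.isCompact_closure⟩
  refine (hasSum_integral_of_dominated_convergence
    (fun x _ => ‖(g.comp (ContinuousMap.addRight (intVec x))).restrict K‖)
    (fun x => ?_) (fun x => ?_) ?_ ?_ ?_).unique (hasSum_setIntegral_unitCell hg.integrable)
  · exact (by fun_prop : Continuous fun v => g (v + intVec x)).aestronglyMeasurable
  · exact (ae_restrict_iff' measurableSet_unitCell).2 (ae_of_all _ fun v hv =>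
      norm_apply_add_le_norm_restrict g K _ (subset_closure hv))
  · exact ae_of_all _ fun _ => hg K
  · exact integrableOn_const isBounded_unitCell.measure_lt_top.ne
  · exact ae_of_all _ fun v => (hg.hasSum v).summable.hasSum

end HasSummableTranslates

omit [Fintype ι] in
lemma exists_continuousMap_unitAddTorus [Finite ι] {X : Type*} [TopologicalSpace X]
    {f : EuclideanSpace ℝ ι → X} (hf : Continuous f) (hper : ∀ u x, f (u + intVec x) = f u) :
    ∃ F : C(UnitAddTorus ι, X), ∀ u, F (fun i => (u i : UnitAddCircle)) = f u := by
  let q : C(EuclideanSpace ℝ ι, UnitAddTorus ι) := ⟨fun u i => (u i : UnitAddCircle), by fun_prop⟩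
  have hq : IsQuotientMap q :=
    ((IsOpenQuotientMap.piMap (f := fun (_ : ι) (r : ℝ) => (r : UnitAddCircle))
      fun _ => QuotientAddGroup.isOpenQuotientMap_mk).isQuotientMap).comp
      (PiLp.homeomorph 2 fun _ : ι => ℝ).isQuotientMap
  have hfact : Function.FactorsThrough f q := by
    intro u v huv
    have hint : ∀ i, ∃ n : ℤ, n • (1 : ℝ) = u i - v i := fun i => by
      rw [← AddCircle.coe_eq_zero_iff, AddCircle.coe_sub, sub_eq_zero]
      exact congrFun huv i
    choose x hx using hint
    simp only [zsmul_one] at hx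
    rw [← hper v x]
    congr 1
    ext i
    simp [hx]
  exact ⟨hq.lift ⟨f, hf⟩ hfact, DFunLike.congr_fun (hq.lift_comp ⟨f, hf⟩ hfact)⟩

lemma mFourier_coe_apply (y : ι → ℤ) (u : EuclideanSpace ℝ ι) :
    UnitAddTorus.mFourier y (fun i => (u i : UnitAddCircle)) =
      Real.fourierChar ⟪u, intVec y⟫_ℝ := by
  rw [real_inner_comm, inner_intVec, Real.fourierChar_apply]
  push_cast
  simp only [UnitAddTorus.mFourier, ContinuousMap.coe_mk, fourier_coe_apply, Finset.mul_sum,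
    Finset.sum_mul, Complex.exp_sum]
  refine Finset.prod_congr rfl fun i _ => ?_
  push_cast
  ring_nf

lemma fourierChar_inner_intVec (x y : ι → ℤ) :
    Real.fourierChar ⟪intVec x, intVec y⟫_ℝ = 1 := by
  have hinner : ⟪intVec x, intVec y⟫_ℝ = (∑ i, x i * y i : ℤ) := by simp [inner_intVec]
  ext
  rw [hinner, Real.fourierChar_apply, Circle.coe_one,
    ← Complex.exp_int_mul_two_pi_mul_I (∑ i, x i * y i)]
  push_cast
  ring_nf

lemma mFourierCoeff_eq_setIntegral_unitCell (f : UnitAddTorus ι → ℂ) (y : ι → ℤ) :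
    UnitAddTorus.mFourierCoeff f y = ∫ v in unitCell ι,
      Real.fourierChar (-⟪v, intVec y⟫_ℝ) • f fun i => (v i : UnitAddCircle) := by
  rw [UnitAddTorus.mFourierCoeff_eq_integral f y 0,
    ← (PiLp.volume_preserving_toLp ι).setIntegral_preimage_emb
      (MeasurableEquiv.toLp 2 (ι → ℝ)).measurableEmbedding]
  have hneg : intVec (-y) = -intVec y := by ext i; simp
  have hchar (v : ι → ℝ) : UnitAddTorus.mFourier (-y) (fun i => (v i : UnitAddCircle)) =
      Real.fourierChar (-⟪WithLp.toLp 2 v, intVec y⟫_ℝ) := by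
    rw [← inner_neg_right, ← hneg, ← mFourier_coe_apply]
  simp only [unitCell, Pi.zero_apply, zero_add, Set.preimage_ofPred_eq, hchar, Circle.smul_def]

theorem mFourierCoeff_eq_fourier {g : C(EuclideanSpace ℝ ι, ℂ)}
    (hg : HasSummableTranslates g) {f : UnitAddTorus ι → ℂ}
    (hf : ∀ u : EuclideanSpace ℝ ι, f (fun i => (u i : UnitAddCircle)) = ∑' x, g (u + intVec x))
    (y : ι → ℤ) :
    UnitAddTorus.mFourierCoeff f y = 𝓕 (g : EuclideanSpace ℝ ι → ℂ) (intVec y) := by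
  let h : C(EuclideanSpace ℝ ι, ℂ) :=
    ⟨fun v => Real.fourierChar (-⟪v, intVec y⟫_ℝ) • g v, by fun_prop⟩
  have hh : HasSummableTranslates h := hg.mono fun v => (Circle.norm_smul _ _).le
  have hper (v : EuclideanSpace ℝ ι) (x : ι → ℤ) :
      Real.fourierChar (-⟪v + intVec x, intVec y⟫_ℝ) = Real.fourierChar (-⟪v, intVec y⟫_ℝ) := by
    rw [inner_add_left, neg_add, AddChar.map_add_eq_mul, AddChar.map_neg_eq_inv _ ⟪intVec x, _⟫_ℝ,
      fourierChar_inner_intVec, inv_one, mul_one]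
  rw [mFourierCoeff_eq_setIntegral_unitCell, Real.fourier_eq]
  refine Eq.trans ?_ hh.setIntegral_unitCell_tsum
  simp only [h, ContinuousMap.coe_mk, hper, hf, Circle.smul_def, tsum_const_smul'']

/-- Poisson summation for the lattice of integral vectors. -/
theorem hasSum_fourier_intVec {g : C(EuclideanSpace ℝ ι, ℂ)} (hg : HasSummableTranslates g)
    (hsum : Summable fun y : ι → ℤ => 𝓕 (g : EuclideanSpace ℝ ι → ℂ) (intVec y))
    (u : EuclideanSpace ℝ ι) :
    HasSum (fun y : ι → ℤ =>
        Real.fourierChar ⟪u, intVec y⟫_ℝ • 𝓕 (g : EuclideanSpace ℝ ι → ℂ) (intVec y))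
      (∑' x : ι → ℤ, g (u + intVec x)) := by
  have hper (u : EuclideanSpace ℝ ι) (z : ι → ℤ) :
      ∑' x, g (u + intVec z + intVec x) = ∑' x, g (u + intVec x) := by
    simp_rw [← (Equiv.addLeft z).tsum_eq fun x => g (u + intVec x), Equiv.coe_addLeft, intVec_add,
      add_assoc]
  obtain ⟨f, hf⟩ := exists_continuousMap_unitAddTorus hg.continuous_tsum hper
  have hcoeff := funext (mFourierCoeff_eq_fourier hg hf)
  have h := UnitAddTorus.hasSum_mFourier_series_apply_of_summable (f := f)
    (by rwa [hcoeff]) (fun i => (u i : UnitAddCircle))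
  simpa only [hcoeff, hf, mFourier_coe_apply, smul_eq_mul, Circle.smul_def, mul_comm] using h

end PoissonSummation

section Gaussian

open Filter Topology MeasureTheory TopologicalSpace
open scoped InnerProductSpace FourierTransform

lemma map_symm_addHaar {V : Type*} [NormedAddCommGroup V] [NormedSpace ℝ V]
    [FiniteDimensional ℝ V] [MeasurableSpace V] [BorelSpace V] (μ : Measure V)
    [μ.IsAddHaarMeasure] (A : V ≃L[ℝ] V) :
    μ.map A.symm = ENNReal.ofReal |LinearMap.det (A : V →ₗ[ℝ] V)| • μ := by
  have hdet : LinearMap.det (A.symm : V →ₗ[ℝ] V) ≠ 0 :=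
    (LinearEquiv.isUnit_det' A.symm.toLinearEquiv).ne_zero
  have hinv : (LinearMap.det (A.symm : V →ₗ[ℝ] V))⁻¹ = LinearMap.det (A : V →ₗ[ℝ] V) :=
    inv_eq_of_mul_eq_one_left (LinearEquiv.det_mul_det_symm A.toLinearEquiv)
  rw [← hinv]
  exact Measure.map_linearMap_addHaar_eq_smul_addHaar μ hdet

lemma fourier_comp_symm {V F : Type*} [NormedAddCommGroup V] [InnerProductSpace ℝ V]
    [FiniteDimensional ℝ V] [MeasurableSpace V] [BorelSpace V] [NormedAddCommGroup F]
    [NormedSpace ℂ F] (A : V ≃L[ℝ] V) (h : V → F) (w : V) :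
    𝓕 (fun v => h (A.symm v)) w =
      |LinearMap.det (A : V →ₗ[ℝ] V)| • 𝓕 h (A.toContinuousLinearMap.adjoint w) := by
  let f (v : V) : F := Real.fourierChar (-⟪v, A.toContinuousLinearMap.adjoint w⟫_ℝ) • h v
  have hf (v : V) : Real.fourierChar (-⟪v, w⟫_ℝ) • h (A.symm v) = f (A.symm v) := by
    simp [f, ContinuousLinearMap.adjoint_inner_right]
  simp only [Real.fourier_eq, hf]
  refine (A.symm.toHomeomorph.measurableEmbedding.integral_map f).symm.trans ?_
  simp [map_symm_addHaar, f]

lemma exists_exp_neg_mul_norm_sq_le {E F : Type*} [NormedAddCommGroup E] [NormedSpace ℝ E]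
    [FiniteDimensional ℝ E] [NormedAddCommGroup F] [NormedSpace ℝ F] {T : E →L[ℝ] F}
    (hT : Function.Injective T) {c : ℝ} (hc : 0 < c) :
    ∃ c' > 0, ∀ v, Real.exp (-c * ‖T v‖ ^ 2) ≤ Real.exp (-c' * ‖v‖ ^ 2) := by
  obtain ⟨K, hK, hanti⟩ := T.toLinearMap.exists_antilipschitzWith (LinearMap.ker_eq_bot.2 hT)
  have _ : (0 : ℝ) < K := hK
  refine ⟨c / K ^ 2, by positivity, fun v => Real.exp_le_exp.2 ?_⟩
  have hnorm : ‖v‖ ^ 2 ≤ K ^ 2 * ‖T v‖ ^ 2 := by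
    rw [← mul_pow]
    gcongr
    exact hanti.le_mul_norm (map_zero _) v
  rw [neg_mul, neg_mul, neg_le_neg_iff, div_mul_eq_mul_div, div_le_iff₀ (by positivity)]
  nlinarith

variable {ι : Type*} [Fintype ι]

lemma intVec_mem_span_basisFun (x : ι → ℤ) :
    intVec x ∈ Submodule.span ℤ (Set.range (EuclideanSpace.basisFun ι ℝ).toBasis) := by
  classical
  have hx : intVec x = ∑ i, x i • (EuclideanSpace.basisFun ι ℝ).toBasis i := by
    ext j
    simp [Finset.sum_apply, Pi.single_apply]
  rw [hx]
  exact Submodule.sum_mem _ fun i _ => Submodule.smul_mem _ _ (Submodule.subset_span ⟨i, rfl⟩)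

lemma tendsto_norm_intVec_cofinite :
    Tendsto (fun x : ι → ℤ => ‖intVec x‖) cofinite atTop := by
  refine tendsto_atTop.2 fun R => ?_
  have hfin := (ZSpan.setFinite_inter (EuclideanSpace.basisFun ι ℝ).toBasis
    (Metric.isBounded_closedBall (x := 0) (r := R))).preimage (f := intVec) intVec_injective.injOn
  exact hfin.subset fun x hx =>
    ⟨mem_closedBall_zero_iff.2 (not_le.1 fun h => hx h).le, intVec_mem_span_basisFun x⟩

lemma summable_exp_neg_mul_norm_intVec_sq {c : ℝ} (hc : 0 < c) :
    Summable fun x : ι → ℤ => Real.exp (-c * ‖intVec x‖ ^ 2) := by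
  let L := Submodule.span ℤ (Set.range (EuclideanSpace.basisFun ι ℝ).toBasis)
  let k := Module.finrank ℤ L + 1
  have hinj : Function.Injective fun x : ι → ℤ => (⟨intVec x, intVec_mem_span_basisFun x⟩ : L) :=
    fun x y h => intVec_injective (congrArg Subtype.val h)
  have hpow : Summable fun x : ι → ℤ => ‖intVec x‖⁻¹ ^ k :=
    ((ZLattice.summable_norm_pow_inv L k (Nat.lt_succ_self _)).comp_injective hinj).congr
      fun _ => rfl
  have hlittleO : (fun r : ℝ => Real.exp (-c * r ^ 2)) =o[atTop] fun r : ℝ => r⁻¹ ^ k := by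
    simpa [Real.rpow_neg_eq_inv_rpow] using
      rexp_neg_quadratic_isLittleO_rpow_atTop (neg_lt_zero.2 hc) 0 (-(k : ℝ))
  exact summable_of_isBigO hpow (hlittleO.comp_tendsto tendsto_norm_intVec_cofinite).isBigO

lemma hasSummableTranslates_of_norm_le_exp {F : Type*} [NormedAddCommGroup F]
    {g : C(EuclideanSpace ℝ ι, F)} {c : ℝ} (hc : 0 < c)
    (hg : ∀ v, ‖g v‖ ≤ Real.exp (-c * ‖v‖ ^ 2)) : HasSummableTranslates g := by
  intro K
  obtain ⟨R, hR⟩ := K.isCompact.isBounded.exists_norm_le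
  refine ((summable_exp_neg_mul_norm_intVec_sq (half_pos hc)).mul_left
    (Real.exp (c * R ^ 2))).of_nonneg_of_le (fun _ => norm_nonneg _) fun x => ?_
  refine (ContinuousMap.norm_le _ (by positivity)).2 fun ⟨v, hv⟩ => (hg _).trans ?_
  have hnorm : ‖intVec x‖ ≤ ‖v + intVec x‖ + ‖v‖ := by
    simpa using norm_sub_le (v + intVec x) v
  have hsq : ‖intVec x‖ ^ 2 ≤ 2 * ‖v + intVec x‖ ^ 2 + 2 * R ^ 2 := by
    nlinarith [norm_nonneg (intVec x), norm_nonneg v, hR v hv,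
      sq_nonneg (‖v + intVec x‖ - ‖v‖)]
  rw [← Real.exp_add, Real.exp_le_exp]
  simp only [ContinuousMap.coe_addRight]
  nlinarith

/-- The theta series of the translated lattice `A⁻¹(u + ℤ^ι)`, at scale `s`. -/
noncomputable def latticeTheta (A : EuclideanSpace ℝ ι ≃L[ℝ] EuclideanSpace ℝ ι) (s : ℝ)
    (u : EuclideanSpace ℝ ι) : ℝ :=
  ∑' x : ι → ℤ, Real.exp (-(Real.pi * s) * ‖A.symm (u + intVec x)‖ ^ 2)

/-- The theta series of the dual lattice `A†(ℤ^ι)`, at scale `1 / s` and twisted by the character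
attached to `u`. -/
noncomputable def dualTheta (A : EuclideanSpace ℝ ι ≃L[ℝ] EuclideanSpace ℝ ι) (s : ℝ)
    (u : EuclideanSpace ℝ ι) : ℝ :=
  ∑' y : ι → ℤ, Real.exp (-(Real.pi / s) * ‖A.toContinuousLinearMap.adjoint (intVec y)‖ ^ 2) *
    Real.cos (2 * Real.pi * ⟪intVec y, u⟫_ℝ)

variable (A : EuclideanSpace ℝ ι ≃L[ℝ] EuclideanSpace ℝ ι) {s : ℝ}

lemma hasSummableTranslates_gaussian_symm {F : Type*} [NormedAddCommGroup F] (hs : 0 < s)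
    {g : C(EuclideanSpace ℝ ι, F)}
    (hg : ∀ v, ‖g v‖ ≤ Real.exp (-(Real.pi * s) * ‖A.symm v‖ ^ 2)) : HasSummableTranslates g := by
  obtain ⟨c, hc, hle⟩ := exists_exp_neg_mul_norm_sq_le (T := A.symm.toContinuousLinearMap)
    A.symm.injective (by positivity : 0 < Real.pi * s)
  exact hasSummableTranslates_of_norm_le_exp hc fun v => (hg v).trans (hle v)

lemma summable_latticeTheta (hs : 0 < s) (u : EuclideanSpace ℝ ι) :
    Summable fun x : ι → ℤ => Real.exp (-(Real.pi * s) * ‖A.symm (u + intVec x)‖ ^ 2) :=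
  ((hasSummableTranslates_gaussian_symm A hs
    (g := ⟨fun v => Real.exp (-(Real.pi * s) * ‖A.symm v‖ ^ 2), by fun_prop⟩)
    fun v => by simp).hasSum u).summable

lemma summable_dualTheta_zero (hs : 0 < s) : Summable fun y : ι → ℤ =>
    Real.exp (-(Real.pi / s) * ‖A.toContinuousLinearMap.adjoint (intVec y)‖ ^ 2) := by
  have hinj : Function.Injective A.toContinuousLinearMap.adjoint := by
    refine fun v w h => ext_inner_right ℝ fun z => ?_
    simpa [ContinuousLinearMap.adjoint_inner_left] using congrArg (⟪·, A.symm z⟫_ℝ) h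
  obtain ⟨c, hc, hle⟩ := exists_exp_neg_mul_norm_sq_le hinj (by positivity : 0 < Real.pi / s)
  exact (summable_exp_neg_mul_norm_intVec_sq hc).of_nonneg_of_le (fun _ => (Real.exp_pos _).le)
    fun y => hle _

lemma summable_dualTheta (hs : 0 < s) (u : EuclideanSpace ℝ ι) : Summable fun y : ι → ℤ =>
    Real.exp (-(Real.pi / s) * ‖A.toContinuousLinearMap.adjoint (intVec y)‖ ^ 2) *
      Real.cos (2 * Real.pi * ⟪intVec y, u⟫_ℝ) :=
  .of_norm_bounded (summable_dualTheta_zero A hs) fun y => by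
    rw [norm_mul, Real.norm_of_nonneg (Real.exp_pos _).le]
    exact mul_le_of_le_one_right (Real.exp_pos _).le (Real.abs_cos_le_one _)

lemma fourier_gaussian_symm (hs : 0 < s) (w : EuclideanSpace ℝ ι) :
    𝓕 (fun v => (Real.exp (-(Real.pi * s) * ‖A.symm v‖ ^ 2) : ℂ)) w =
      ((|LinearMap.det (A : EuclideanSpace ℝ ι →ₗ[ℝ] EuclideanSpace ℝ ι)| *
        (1 / s) ^ (Fintype.card ι / 2 : ℝ) *
        Real.exp (-(Real.pi / s) * ‖A.toContinuousLinearMap.adjoint w‖ ^ 2) : ℝ) : ℂ) := by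
  have hpi : (Real.pi : ℂ) ≠ 0 := by exact_mod_cast Real.pi_ne_zero
  have hs' : (s : ℂ) ≠ 0 := by exact_mod_cast hs.ne'
  have hscale : (((1 / s) ^ (Fintype.card ι / 2 : ℝ) : ℝ) : ℂ) =
      (Real.pi / (Real.pi * s : ℝ) : ℂ) ^ (Fintype.card ι / 2 : ℂ) := by
    rw [Complex.ofReal_cpow (by positivity)]
    push_cast
    congr 1
    field_simp
  have h := fourier_comp_symm A (fun v => Complex.exp (-(Real.pi * s : ℝ) * ‖v‖ ^ 2)) w
  rw [fourier_gaussian_innerProductSpace (by simpa using by positivity), finrank_euclideanSpace,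
    ← hscale] at h
  convert h using 1
  · push_cast
    rfl
  · rw [Complex.real_smul]
    push_cast
    rw [← mul_assoc]
    congr 2
    field_simp

theorem latticeTheta_eq_mul_dualTheta (hs : 0 < s) (u : EuclideanSpace ℝ ι) :
    latticeTheta A s u =
      |LinearMap.det (A : EuclideanSpace ℝ ι →ₗ[ℝ] EuclideanSpace ℝ ι)| *
        (1 / s) ^ (Fintype.card ι / 2 : ℝ) * dualTheta A s u := by
  let g : C(EuclideanSpace ℝ ι, ℂ) :=
    ⟨fun v => (Real.exp (-(Real.pi * s) * ‖A.symm v‖ ^ 2) : ℂ), by fun_prop⟩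
  have hg : HasSummableTranslates g := hasSummableTranslates_gaussian_symm A hs fun _ =>
    (Complex.norm_of_nonneg (Real.exp_pos _).le).le
  have hsum : Summable fun y : ι → ℤ => 𝓕 (g : EuclideanSpace ℝ ι → ℂ) (intVec y) := by
    refine (Complex.summable_ofReal.2 ((summable_dualTheta_zero A hs).mul_left _)).congr
      fun y => (fourier_gaussian_symm A hs _).symm
  have h := Complex.hasSum_re (hasSum_fourier_intVec hg hsum u)
  have hleft : (∑' x : ι → ℤ, g (u + intVec x)).re = latticeTheta A s u := by
    simp only [g, ContinuousMap.coe_mk, ← Complex.ofReal_tsum, Complex.ofReal_re, latticeTheta]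
  rw [← hleft, ← h.tsum_eq, dualTheta, ← tsum_mul_left]
  refine tsum_congr fun y => ?_
  have hchar : (Real.fourierChar ⟪u, intVec y⟫_ℝ : ℂ).re =
      Real.cos (2 * Real.pi * ⟪intVec y, u⟫_ℝ) := by
    rw [Real.fourierChar_apply, Complex.exp_ofReal_mul_I_re, real_inner_comm]
  simp only [g, ContinuousMap.coe_mk, fourier_gaussian_symm A hs, Circle.smul_def, smul_eq_mul,
    Complex.re_mul_ofReal, hchar]
  ring

end Gaussian

section Transference

open scoped InnerProductSpace

variable {ι : Type*} [Fintype ι] {A : EuclideanSpace ℝ ι ≃L[ℝ] EuclideanSpace ℝ ι} {r s s' : ℝ}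
  {u : EuclideanSpace ℝ ι}

lemma dualTheta_zero (A : EuclideanSpace ℝ ι ≃L[ℝ] EuclideanSpace ℝ ι) (s : ℝ) :
    dualTheta A s 0 = ∑' y : ι → ℤ,
      Real.exp (-(Real.pi / s) * ‖A.toContinuousLinearMap.adjoint (intVec y)‖ ^ 2) := by
  simp [dualTheta]

lemma dualTheta_le_dualTheta_zero (hs : 0 < s) : dualTheta A s u ≤ dualTheta A s 0 := by
  rw [dualTheta_zero]
  exact (summable_dualTheta A hs u).tsum_le_tsum
    (fun y => mul_le_of_le_one_right (Real.exp_pos _).le (Real.cos_le_one _))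
    (summable_dualTheta_zero A hs)

lemma dualTheta_zero_mono (hs : 0 < s) (hle : s ≤ s') : dualTheta A s 0 ≤ dualTheta A s' 0 := by
  rw [dualTheta_zero, dualTheta_zero]
  refine (summable_dualTheta_zero A hs).tsum_le_tsum (fun y => Real.exp_le_exp.2 ?_)
    (summable_dualTheta_zero A (hs.trans_le hle))
  gcongr

lemma latticeTheta_anti (hs : 0 < s) (hle : s ≤ s') :
    latticeTheta A s' u ≤ latticeTheta A s u := by
  refine (summable_latticeTheta A (hs.trans_le hle) u).tsum_le_tsum
    (fun x => Real.exp_le_exp.2 ?_) (summable_latticeTheta A hs u)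
  gcongr

lemma two_le_dualTheta_add_dualTheta_zero (hs : 0 < s) :
    2 ≤ dualTheta A s u + dualTheta A s 0 := by
  have hu := summable_dualTheta A hs u
  have h0 := summable_dualTheta_zero A hs
  rw [dualTheta_zero, dualTheta, ← hu.tsum_add h0]
  refine le_trans ?_ ((hu.add h0).le_tsum 0 fun y _ => ?_)
  · norm_num
  · rw [← mul_add_one]
    have hcos := Real.neg_one_le_cos (2 * Real.pi * ⟪intVec y, u⟫_ℝ)
    exact mul_nonneg (Real.exp_pos _).le (by linarith)

lemma latticeTheta_le_exp_mul (hr : 0 ≤ r) (hu : ∀ x, r ≤ ‖A.symm (u + intVec x)‖) (hs : 0 < s)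
    (hle : s ≤ s') :
    latticeTheta A s' u ≤ Real.exp (-(Real.pi * r ^ 2 * (s' - s))) * latticeTheta A s u := by
  rw [latticeTheta, latticeTheta, ← tsum_mul_left]
  refine (summable_latticeTheta A (hs.trans_le hle) u).tsum_le_tsum (fun x => ?_)
    ((summable_latticeTheta A hs u).mul_left _)
  have hsq : r ^ 2 ≤ ‖A.symm (u + intVec x)‖ ^ 2 := pow_le_pow_left₀ hr (hu x) 2
  have hnonneg : 0 ≤ Real.pi * (s' - s) := mul_nonneg Real.pi_pos.le (sub_nonneg.2 hle)
  rw [← Real.exp_add, Real.exp_le_exp]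
  nlinarith [mul_le_mul_of_nonneg_left hsq hnonneg]

lemma dualTheta_zero_le_one_add_exp_mul (hr : 0 ≤ r)
    (hA : ∀ y, y ≠ 0 → r ≤ ‖A.toContinuousLinearMap.adjoint (intVec y)‖) (hs : 0 < s)
    (hle : s ≤ s') :
    dualTheta A s 0 ≤
      1 + Real.exp (-(Real.pi * r ^ 2 * (1 / s - 1 / s'))) * dualTheta A s' 0 := by
  classical
  have hsum := summable_dualTheta_zero A hs
  have hsum' := summable_dualTheta_zero A (hs.trans_le hle)
  rw [dualTheta_zero, dualTheta_zero, hsum.tsum_eq_add_tsum_ite 0, ← tsum_mul_left]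
  refine add_le_add (by simp) (Summable.tsum_le_tsum (fun y => ?_)
    ((hsum.update 0 0).congr fun y => Function.update_apply _ _ _ _) (hsum'.mul_left _))
  split_ifs with hy
  · positivity
  · have hsq : r ^ 2 ≤ ‖A.toContinuousLinearMap.adjoint (intVec y)‖ ^ 2 :=
      pow_le_pow_left₀ hr (hA y hy) 2
    have hnonneg : 0 ≤ Real.pi * (1 / s - 1 / s') :=
      mul_nonneg Real.pi_pos.le (sub_nonneg.2 (one_div_le_one_div_of_le hs hle))
    rw [← Real.exp_add, Real.exp_le_exp, div_eq_mul_one_div Real.pi s,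
      div_eq_mul_one_div Real.pi s']
    nlinarith [mul_le_mul_of_nonneg_left hsq hnonneg]

lemma dualTheta_le_of_latticeTheta_le {C : ℝ} {v : EuclideanSpace ℝ ι} (hs : 0 < s) (hs' : 0 < s')
    (h : latticeTheta A s' u ≤ C * latticeTheta A s v) :
    dualTheta A s' u ≤ C * (s' / s) ^ (Fintype.card ι / 2 : ℝ) * dualTheta A s v := by
  have hdet : LinearMap.det (A : EuclideanSpace ℝ ι →ₗ[ℝ] EuclideanSpace ℝ ι) ≠ 0 :=
    (LinearEquiv.isUnit_det' A.toLinearEquiv).ne_zero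
  have hscale : (s' / s) ^ (Fintype.card ι / 2 : ℝ) * (1 / s') ^ (Fintype.card ι / 2 : ℝ) =
      (1 / s) ^ (Fintype.card ι / 2 : ℝ) := by
    rw [← Real.mul_rpow (by positivity) (by positivity)]
    congr 1
    field_simp
  rw [latticeTheta_eq_mul_dualTheta A hs, latticeTheta_eq_mul_dualTheta A hs', ← hscale] at h
  refine le_of_mul_le_mul_left (h.trans_eq ?_) (by positivity : 0 <
    |LinearMap.det (A : EuclideanSpace ℝ ι →ₗ[ℝ] EuclideanSpace ℝ ι)| *
      (1 / s') ^ (Fintype.card ι / 2 : ℝ))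
  ring

lemma dualTheta_le_of_forall_le_norm (hr : 0 ≤ r) (hu : ∀ x, r ≤ ‖A.symm (u + intVec x)‖)
    (hs : 0 < s) (hle : s ≤ s') :
    dualTheta A s' u ≤ Real.exp (-(Real.pi * r ^ 2 * (s' - s))) *
      (s' / s) ^ (Fintype.card ι / 2 : ℝ) * dualTheta A s' 0 := by
  have hs' := hs.trans_le hle
  refine (dualTheta_le_of_latticeTheta_le hs hs' (latticeTheta_le_exp_mul hr hu hs hle)).trans ?_
  gcongr
  exact (dualTheta_le_dualTheta_zero hs).trans (dualTheta_zero_mono hs hle)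

lemma dualTheta_zero_sub_one_le (hr : 0 ≤ r)
    (hA : ∀ y, y ≠ 0 → r ≤ ‖A.toContinuousLinearMap.adjoint (intVec y)‖) (hs : 0 < s)
    (hle : s ≤ s') :
    dualTheta A s 0 - 1 ≤ Real.exp (-(Real.pi * r ^ 2 * (1 / s - 1 / s'))) *
      (s' / s) ^ (Fintype.card ι / 2 : ℝ) * dualTheta A s 0 := by
  have hgrowth := dualTheta_le_of_latticeTheta_le hs (hs.trans_le hle)
    ((latticeTheta_anti hs hle (A := A) (u := 0)).trans_eq (one_mul _).symm)
  rw [one_mul] at hgrowth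
  rw [sub_le_iff_le_add', mul_assoc]
  exact (dualTheta_zero_le_one_add_exp_mul hr hA hs hle).trans (by gcongr)

lemma primal_tail_lt {n : ℝ} (hn : 2 ≤ n) :
    Real.exp (-(Real.pi * 1 ^ 2 * (n / Real.pi - n / (2 * Real.pi)))) *
      (n / Real.pi / (n / (2 * Real.pi))) ^ (n / 2) < 3 / 4 := by
  have hexp : -(Real.pi * 1 ^ 2 * (n / Real.pi - n / (2 * Real.pi))) = -1 * (n / 2) := by
    field_simp
    ring
  have hratio : n / Real.pi / (n / (2 * Real.pi)) = 2 := by field_simp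
  have hbase : Real.exp (-1) * 2 < 3 / 4 := by
    rw [Real.exp_neg, inv_mul_lt_iff₀ (Real.exp_pos _)]
    linarith [Real.exp_one_gt_d9]
  rw [hexp, hratio, Real.exp_mul, ← Real.mul_rpow (Real.exp_pos _).le two_pos.le]
  exact (Real.rpow_le_self_of_le_one (by positivity) (hbase.le.trans (by norm_num))
    (by linarith)).trans_lt hbase

lemma exp_neg_mul_four_le : Real.exp (-(3 * Real.pi ^ 2 / 8)) * 4 ≤ 1 / 8 := by
  have hexp : 32 ≤ Real.exp (1 + 1 + 1 + 0.6) := by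
    have hone := Real.exp_one_gt_d9
    have hsq : 7 ≤ Real.exp 1 * Real.exp 1 := by nlinarith
    have hcube : 19 ≤ Real.exp 1 * Real.exp 1 * Real.exp 1 := by nlinarith
    have hfrac := Real.quadratic_le_exp_of_nonneg (show (0 : ℝ) ≤ 0.6 by norm_num)
    rw [Real.exp_add, Real.exp_add, Real.exp_add]
    nlinarith
  have hmono : Real.exp (1 + 1 + 1 + 0.6) ≤ Real.exp (3 * Real.pi ^ 2 / 8) :=
    Real.exp_le_exp.2 (by nlinarith [Real.pi_gt_d2])
  rw [Real.exp_neg, inv_mul_le_iff₀ (Real.exp_pos _)]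
  linarith

lemma dual_tail_le {n : ℝ} (hn : 2 ≤ n) :
    Real.exp (-(Real.pi * (n / 2) ^ 2 * (1 / (n / Real.pi) - 1 / (4 * (n / Real.pi))))) *
      (4 * (n / Real.pi) / (n / Real.pi)) ^ (n / 2) ≤ 1 / 8 := by
  have hexp : -(Real.pi * (n / 2) ^ 2 * (1 / (n / Real.pi) - 1 / (4 * (n / Real.pi)))) =
      -(3 * Real.pi ^ 2 / 8) * (n / 2) := by
    field_simp
    ring
  have hratio : 4 * (n / Real.pi) / (n / Real.pi) = 4 := by field_simp
  rw [hexp, hratio, Real.exp_mul, ← Real.mul_rpow (Real.exp_pos _).le (by norm_num)]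
  exact (Real.rpow_le_self_of_le_one (by positivity)
    (exp_neg_mul_four_le.trans (by norm_num)) (by linarith)).trans exp_neg_mul_four_le

theorem exists_norm_symm_add_intVec_lt_one_of_two_le (hι : 2 ≤ Fintype.card ι)
    (hA : ∀ y, y ≠ 0 →
      (Fintype.card ι : ℝ) / 2 ≤ ‖A.toContinuousLinearMap.adjoint (intVec y)‖)
    (u : EuclideanSpace ℝ ι) : ∃ x : ι → ℤ, ‖A.symm (u + intVec x)‖ < 1 := by
  by_contra! hu
  have hn : (2 : ℝ) ≤ Fintype.card ι := by exact_mod_cast hι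
  set n : ℝ := (Fintype.card ι : ℝ)
  have hpi := Real.pi_pos
  have hs : 0 < n / Real.pi := by positivity
  have hprimal := dualTheta_le_of_forall_le_norm zero_le_one hu
    (s := n / (2 * Real.pi)) (s' := n / Real.pi) (by positivity) (by gcongr; linarith)
  have hdual := dualTheta_zero_sub_one_le (by positivity) hA hs
    (s' := 4 * (n / Real.pi)) (by linarith)
  have htwo := two_le_dualTheta_add_dualTheta_zero (A := A) (u := u) hs
  have hpos : 0 < dualTheta A (n / Real.pi) 0 := by
    linarith [dualTheta_le_dualTheta_zero (A := A) (u := u) hs]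
  linarith [mul_lt_mul_of_pos_right (primal_tail_lt hn) hpos,
    mul_le_mul_of_nonneg_right (dual_tail_le hn) hpos.le]

lemma exists_norm_symm_add_intVec_lt_one_of_card_eq_one (hι : Fintype.card ι = 1)
    (hA : 1 / 2 < ‖A.toContinuousLinearMap.adjoint (intVec 1)‖) (u : EuclideanSpace ℝ ι) :
    ∃ x : ι → ℤ, ‖A.symm (u + intVec x)‖ < 1 := by
  obtain ⟨i, hi⟩ := Fintype.card_eq_one_iff.1 hι
  have : Unique ι := ⟨⟨i⟩, hi⟩
  have hnorm (v w : EuclideanSpace ℝ ι) : ‖v‖ * ‖w‖ = |⟪v, w⟫_ℝ| := by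
    simp [EuclideanSpace.norm_eq, PiLp.inner_apply, Real.sqrt_sq_eq_abs, mul_comm]
  refine ⟨fun _ => -round (u default), ?_⟩
  have hround : ‖A.toContinuousLinearMap.adjoint (intVec 1)‖ *
      ‖A.symm (u + intVec fun _ => -round (u default))‖ = |u default - round (u default)| := by
    rw [hnorm, ContinuousLinearMap.adjoint_inner_left]
    simp [inner_intVec, sub_eq_add_neg]
  have hle := hround.trans_le (abs_sub_round (u default))
  nlinarith [norm_nonneg (A.symm (u + intVec fun _ => -round (u default)))]

/-- Banaszczyk's transference theorem, in contrapositive form. -/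
theorem exists_norm_symm_add_intVec_lt_one
    (hA : ∀ y, y ≠ 0 → (Fintype.card ι : ℝ) / 2 < ‖A.toContinuousLinearMap.adjoint (intVec y)‖)
    (u : EuclideanSpace ℝ ι) : ∃ x : ι → ℤ, ‖A.symm (u + intVec x)‖ < 1 := by
  obtain h0 | h1 | h2 : Fintype.card ι = 0 ∨ Fintype.card ι = 1 ∨ 2 ≤ Fintype.card ι := by lia
  · have := Fintype.card_eq_zero_iff.1 h0
    exact ⟨0, by rw [Subsingleton.elim (A.symm _) 0, norm_zero]; exact one_pos⟩
  · have : Nonempty ι := Fintype.card_pos_iff.1 (by lia)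
    exact exists_norm_symm_add_intVec_lt_one_of_card_eq_one h1
      (by simpa [h1] using hA 1 one_ne_zero) u
  · exact exists_norm_symm_add_intVec_lt_one_of_two_le h2 (fun y hy => (hA y hy).le) u

end Transference

section JohnEllipsoid

open Module
open scoped InnerProductSpace

section EllipsoidParams

variable {E : Type*} [NormedAddCommGroup E] [NormedSpace ℝ E] {K : Set E}

/-- The pairs `(A, c)` for which the ellipsoid `A(B) + c` is contained in `K`, where `B` is the
closed unit ball. -/
def ellipsoidParams (K : Set E) : Set ((E →L[ℝ] E) × E) := {p | ∀ v, ‖v‖ ≤ 1 → p.1 v + p.2 ∈ K}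

lemma isClosed_ellipsoidParams (hK : IsClosed K) : IsClosed (ellipsoidParams K) := by
  have : ellipsoidParams K =
      ⋂ (v : E) (_ : ‖v‖ ≤ 1), (fun p : (E →L[ℝ] E) × E => p.1 v + p.2) ⁻¹' K := by
    ext p
    simp [ellipsoidParams]
  rw [this]
  exact isClosed_iInter fun v => isClosed_iInter fun _ => hK.preimage (by fun_prop)

lemma isBounded_ellipsoidParams (hK : Bornology.IsBounded K) :
    Bornology.IsBounded (ellipsoidParams K) := by
  obtain ⟨M, hM⟩ := hK.exists_norm_le
  refine isBounded_iff_forall_norm_le.2 ⟨max (2 * M) M, fun p hp => ?_⟩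
  have hc : ‖p.2‖ ≤ M := by simpa using hM _ (hp 0 (by simp))
  have hM0 : 0 ≤ M := (norm_nonneg _).trans hc
  refine max_le_max ?_ hc
  refine ContinuousLinearMap.opNorm_le_of_unit_norm (by positivity) fun v hv => ?_
  have hle := norm_sub_le (p.1 v + p.2) p.2
  rw [add_sub_cancel_right] at hle
  linarith [hM _ (hp v hv.le)]

variable [FiniteDimensional ℝ E]

lemma exists_mem_ellipsoidParams_det_ne_zero (hint : (interior K).Nonempty) :
    ∃ p ∈ ellipsoidParams K, p.1.det ≠ 0 := by
  obtain ⟨c, hc⟩ := hint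
  obtain ⟨r, hr, hrK⟩ := Metric.nhds_basis_closedBall.mem_iff.1 (mem_interior_iff_mem_nhds.1 hc)
  refine ⟨(r • ContinuousLinearMap.id ℝ E, c), fun v hv => hrK ?_, ?_⟩
  · rw [Metric.mem_closedBall, dist_eq_norm]
    simpa [norm_smul, abs_of_pos hr] using mul_le_of_le_one_right hr.le hv
  · simp [ContinuousLinearMap.det, hr.ne']

lemma exists_ellipsoid_max_det (hK : IsCompact K) (hint : (interior K).Nonempty) :
    ∃ (A : E ≃L[ℝ] E) (c : E), ((A : E →L[ℝ] E), c) ∈ ellipsoidParams K ∧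
      ∀ p ∈ ellipsoidParams K, |p.1.det| ≤ |(A : E →L[ℝ] E).det| := by
  have hcomp : IsCompact (ellipsoidParams K) := Metric.isCompact_of_isClosed_isBounded
    (isClosed_ellipsoidParams hK.isClosed) (isBounded_ellipsoidParams hK.isBounded)
  obtain ⟨p, hp, hp0⟩ := exists_mem_ellipsoidParams_det_ne_zero hint
  obtain ⟨⟨A, c⟩, hA, hmax⟩ := hcomp.exists_isMaxOn ⟨p, hp⟩ (f := fun p => |p.1.det|)
    (continuous_abs.comp (ContinuousLinearMap.continuous_det.comp continuous_fst)).continuousOn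
  have hdet : A.det ≠ 0 := abs_pos.1 ((abs_pos.2 hp0).trans_le (hmax hp))
  exact ⟨A.toContinuousLinearEquivOfDetNeZero hdet, c, hA, hmax⟩

end EllipsoidParams

variable {E : Type*} [NormedAddCommGroup E] [InnerProductSpace ℝ E] {e : E} {R h β : ℝ}

/-- The self-map scaling by `α` along the unit vector `e` and by `β` orthogonally to it. -/
noncomputable def axialScaling (e : E) (α β : ℝ) : E →L[ℝ] E :=
  β • ContinuousLinearMap.id ℝ E + (α - β) • (innerSL ℝ e).smulRight e

lemma axialScaling_apply (e : E) (α β : ℝ) (v : E) :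
    axialScaling e α β v = β • v + ((α - β) * ⟪e, v⟫_ℝ) • e := by
  simp [axialScaling, mul_smul]

lemma inner_axialScaling_right (e : E) (α β : ℝ) (v w : E) :
    ⟪w, axialScaling e α β v⟫_ℝ = ⟪axialScaling e α β w, v⟫_ℝ := by
  simp only [axialScaling_apply, inner_add_right, inner_add_left, inner_smul_right,
    real_inner_smul_left, real_inner_comm w e]
  ring

lemma norm_axialScaling_sq (he : ‖e‖ = 1) (α β : ℝ) (v : E) :
    ‖axialScaling e α β v‖ ^ 2 = β ^ 2 * (‖v‖ ^ 2 - ⟪e, v⟫_ℝ ^ 2) + α ^ 2 * ⟪e, v⟫_ℝ ^ 2 := by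
  rw [axialScaling_apply, norm_add_sq_real, norm_smul, norm_smul, real_inner_smul_left,
    inner_smul_right, real_inner_comm e v, he]
  simp only [Real.norm_eq_abs, mul_pow, sq_abs]
  ring

lemma det_axialScaling [FiniteDimensional ℝ E] (he : ‖e‖ = 1) (α : ℝ) (hβ : β ≠ 0) :
    (axialScaling e α β).det = β ^ (finrank ℝ E - 1) * α := by
  have hscale : (axialScaling e α β : E →ₗ[ℝ] E) =
      β • LinearMap.transvection (innerSL ℝ e : E →ₗ[ℝ] ℝ) (((α - β) / β) • e) := by
    ext v
    simp only [ContinuousLinearMap.coe_coe, axialScaling_apply, LinearMap.smul_apply,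
      LinearMap.transvection.apply, innerSL_apply_apply, smul_add, smul_smul]
    congr 2
    field_simp
  have hpos : 0 < finrank ℝ E :=
    finrank_pos_iff_exists_ne_zero.2 ⟨e, fun h0 => by simp [h0] at he⟩
  have hpow : β ^ finrank ℝ E = β ^ (finrank ℝ E - 1) * β := (pow_sub_one_mul hpos.ne' β).symm
  rw [ContinuousLinearMap.det, hscale, LinearMap.det_smul, LinearMap.transvection.det, hpow]
  simp [he]
  field_simp
  ring

/-- In terms of support functions: a bound valid on the unit ball and at `R • e` is valid on the
ellipsoid elongated towards `R • e`. -/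
lemma norm_axialScaling_add_le (he : ‖e‖ = 1) (hR : 1 < R) (h0 : 0 ≤ h) (h1 : h ≤ 1)
    (hβ : β ^ 2 = 1 - 2 * h / (R - 1)) {w : E} {u : ℝ} (hwu : ‖w‖ ≤ u) (hRw : R * ⟪e, w⟫_ℝ ≤ u) :
    ‖axialScaling e (1 + h) β w‖ ≤ u - h * ⟪e, w⟫_ℝ := by
  have hR1 : 0 < R - 1 := sub_pos.2 hR
  have hinner : |⟪e, w⟫_ℝ| ≤ u := (abs_real_inner_le_norm e w).trans (by rwa [he, one_mul])
  obtain ⟨hlower, hupper⟩ := abs_le.1 hinner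
  refine abs_le_of_sq_le_sq' ?_ (by nlinarith) |>.2
  set s := ⟪e, w⟫_ℝ
  calc ‖axialScaling e (1 + h) β w‖ ^ 2
      ≤ β ^ 2 * (u ^ 2 - s ^ 2) + (1 + h) ^ 2 * s ^ 2 := by rw [norm_axialScaling_sq he]; gcongr
    _ = (u - h * s) ^ 2 - (u + s) * (2 * h / (R - 1)) * (u - R * s) := by
      rw [hβ]
      field_simp
      ring
    _ ≤ (u - h * s) ^ 2 := sub_le_self _
      (mul_nonneg (mul_nonneg (by linarith) (by positivity)) (sub_nonneg.2 hRw))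

lemma norm_le_of_forall_inner_le {w : E} {u : ℝ} (h : ∀ v, ‖v‖ ≤ 1 → ⟪w, v⟫_ℝ ≤ u) : ‖w‖ ≤ u := by
  rcases eq_or_ne w 0 with rfl | hw
  · simpa using h 0 (by simp)
  · have hw' : ‖w‖ ≠ 0 := norm_ne_zero_iff.2 hw
    refine le_of_eq_of_le ?_ (h (‖w‖⁻¹ • w) (by simp [norm_smul, hw']))
    rw [inner_smul_right, real_inner_self_eq_norm_sq]
    field_simp

variable [CompleteSpace E] {K : Set E}

lemma axialScaling_mem_ellipsoidParams (hK : Convex ℝ K) (hKc : IsClosed K)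
    (hball : Metric.closedBall 0 1 ⊆ K) (he : ‖e‖ = 1) (hR : 1 < R) (hRe : R • e ∈ K)
    (h0 : 0 ≤ h) (h1 : h ≤ 1) (hβ : β ^ 2 = 1 - 2 * h / (R - 1)) :
    (axialScaling e (1 + h) β, h • e) ∈ ellipsoidParams K := by
  intro v hv
  by_contra hmem
  obtain ⟨f, u, hfu, huf⟩ := geometric_hahn_banach_closed_point hK hKc hmem
  obtain ⟨w, rfl⟩ := (InnerProductSpace.toDual ℝ E).surjective f
  simp only [InnerProductSpace.toDual_apply_apply] at hfu huf
  have hwu : ‖w‖ ≤ u := norm_le_of_forall_inner_le fun v hv =>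
    (hfu v (hball (mem_closedBall_zero_iff.2 hv))).le
  have hRw : R * ⟪e, w⟫_ℝ ≤ u := by
    simpa [inner_smul_right, real_inner_comm] using (hfu _ hRe).le
  refine huf.not_ge ?_
  have hlinear : ⟪axialScaling e (1 + h) β w, v⟫_ℝ ≤ ‖axialScaling e (1 + h) β w‖ :=
    (real_inner_le_norm _ v).trans (mul_le_of_le_one_right (norm_nonneg _) hv)
  rw [inner_add_right, inner_axialScaling_right, inner_smul_right, real_inner_comm e w]
  linarith [norm_axialScaling_add_le he hR h0 h1 hβ hwu hRw]

/-- To first order in `h` the volume ratio `β ^ n * (1 + h)` is `1 + (1 - n / (R - 1)) * h`. -/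
lemma exists_scaling_factors {n : ℕ} (hn : n < R - 1) :
    ∃ h β : ℝ, 0 < h ∧ h ≤ 1 ∧ 0 < β ∧ β ^ 2 = 1 - 2 * h / (R - 1) ∧ 1 < β ^ n * (1 + h) := by
  have hn0 : (0 : ℝ) ≤ n := n.cast_nonneg
  have hR1 : 0 < R - 1 := hn0.trans_lt hn
  set δ := 2 * n / (R - 1) with hδ
  have hδ0 : 0 ≤ δ := by positivity
  have hδ2 : δ < 2 := by rw [hδ, div_lt_iff₀ hR1]; linarith
  obtain ⟨h, hh0, hh⟩ : ∃ h, 0 < h ∧ h < min ((2 - δ) / 12) ((R - 1) / 4) :=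
    exists_between (lt_min (by linarith) (by linarith))
  obtain ⟨hhδ, hhR⟩ := lt_min_iff.1 hh
  have hγ : 2 * h / (R - 1) < 1 := by rw [div_lt_one hR1]; linarith
  refine ⟨h, √(1 - 2 * h / (R - 1)), hh0, by linarith, Real.sqrt_pos.2 (sub_pos.2 hγ),
    Real.sq_sqrt (sub_nonneg.2 hγ.le), ?_⟩
  refine lt_of_pow_lt_pow_left₀ 2 (by positivity) ?_
  have hbernoulli : 1 - δ * h ≤ (1 - 2 * h / (R - 1)) ^ n := by
    refine (le_of_eq ?_).trans (one_add_mul_le_pow (by linarith : -2 ≤ -(2 * h / (R - 1))) n)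
    rw [hδ]
    ring
  have hexpand : 1 < (1 - δ * h) * (1 + h) ^ 2 := by
    have hfactor : 0 < 2 - δ - (2 * δ - 1) * h - δ * h ^ 2 := by nlinarith [sq_nonneg h]
    linear_combination h * hfactor
  calc 1 ^ 2 < (1 - δ * h) * (1 + h) ^ 2 := by rwa [one_pow]
    _ ≤ (1 - 2 * h / (R - 1)) ^ n * (1 + h) ^ 2 := by gcongr
    _ = (√(1 - 2 * h / (R - 1)) ^ n * (1 + h)) ^ 2 := by
      rw [mul_pow, ← pow_mul, mul_comm n 2, pow_mul, Real.sq_sqrt (sub_nonneg.2 hγ.le)]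

omit [CompleteSpace E]
variable [FiniteDimensional ℝ E]

lemma exists_mem_ellipsoidParams_one_lt_det (hK : Convex ℝ K) (hKc : IsClosed K)
    (hball : Metric.closedBall 0 1 ⊆ K) {x : E} (hx : x ∈ K) (hlt : finrank ℝ E < ‖x‖) :
    ∃ p ∈ ellipsoidParams K, 1 < p.1.det := by
  have hx0 : ‖x‖ ≠ 0 := ((Nat.cast_nonneg _).trans_lt hlt).ne'
  have hpos : 0 < finrank ℝ E :=
    finrank_pos_iff_exists_ne_zero.2 ⟨x, norm_ne_zero_iff.1 hx0⟩
  have hn : ((finrank ℝ E - 1 : ℕ) : ℝ) < ‖x‖ - 1 := by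
    rw [Nat.cast_pred hpos]
    linarith
  obtain ⟨h, β, hh0, hh1, hβ0, hβ, hdet⟩ := exists_scaling_factors hn
  have he : ‖‖x‖⁻¹ • x‖ = 1 := by simp [norm_smul, hx0]
  refine ⟨_, axialScaling_mem_ellipsoidParams hK hKc hball he (R := ‖x‖) ?_ ?_ hh0.le hh1 hβ, ?_⟩
  · linarith [(Nat.cast_nonneg _).trans_lt hn]
  · rwa [smul_inv_smul₀ hx0]
  · rwa [det_axialScaling he _ hβ0.ne']

theorem exists_john_ellipsoid (hK : Convex ℝ K) (hKc : IsCompact K)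
    (hint : (interior K).Nonempty) :
    ∃ (A : E ≃L[ℝ] E) (c : E), ((A : E →L[ℝ] E), c) ∈ ellipsoidParams K ∧
      ∀ x ∈ K, ‖A.symm (x - c)‖ ≤ finrank ℝ E := by
  obtain ⟨A, c, hA, hmax⟩ := exists_ellipsoid_max_det hKc hint
  refine ⟨A, c, hA, fun x hx => ?_⟩
  by_contra! hlt
  let K' : Set E := (fun v => A v + c) ⁻¹' K
  have hK' : Convex ℝ K' := (hK.translate_preimage_left c).linear_preimage (A : E →ₗ[ℝ] E)
  obtain ⟨p, hp, hdet⟩ := exists_mem_ellipsoidParams_one_lt_det hK'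
    (hKc.isClosed.preimage (by fun_prop)) (fun v hv => hA v (mem_closedBall_zero_iff.1 hv))
    (by simpa [K'] using hx) hlt
  have hle := hmax ((A : E →L[ℝ] E).comp p.1, A p.2 + c) fun v hv => by
    simpa [K', add_assoc] using hp v hv
  have hcomp : ((A : E →L[ℝ] E).comp p.1).det = (A : E →L[ℝ] E).det * p.1.det :=
    LinearMap.det_comp _ _
  have hA0 : 0 < |(A : E →L[ℝ] E).det| :=
    abs_pos.2 (LinearEquiv.isUnit_det' A.toLinearEquiv).ne_zero
  rw [hcomp, abs_mul] at hle
  exact ((mul_le_iff_le_one_right hA0).1 hle).not_gt (hdet.trans_le (le_abs_self _))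

end JohnEllipsoid

section Flatness

open Module Metric
open scoped InnerProductSpace

variable {ι : Type*} [Fintype ι] {K : Set (EuclideanSpace ℝ ι)} {w : ℝ}

/-- The lattice width of `K` exceeds `w`: every nonzero integral functional separates two points
of `K` by more than `w`. -/
def LatticeWidthGT (w : ℝ) (K : Set (EuclideanSpace ℝ ι)) : Prop :=
  ∀ y : ι → ℤ, y ≠ 0 → ∃ x ∈ K, ∃ x' ∈ K, w < ⟪intVec y, x - x'⟫_ℝ

lemma LatticeWidthGT.mono {L : Set (EuclideanSpace ℝ ι)} (hK : LatticeWidthGT w K) (hKL : K ⊆ L) :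
    LatticeWidthGT w L := fun y hy =>
  let ⟨x, hx, x', hx', hlt⟩ := hK y hy
  ⟨x, hKL hx, x', hKL hx', hlt⟩

lemma LatticeWidthGT.nonempty [Nonempty ι] (hK : LatticeWidthGT w K) : K.Nonempty :=
  let ⟨x, hx, _⟩ := hK 1 one_ne_zero
  ⟨x, hx⟩

lemma LatticeWidthGT.lt_norm_adjoint {A : EuclideanSpace ℝ ι ≃L[ℝ] EuclideanSpace ℝ ι}
    {c : EuclideanSpace ℝ ι} {R : ℝ} (hK : LatticeWidthGT w K) (hR : 0 < R)
    (hA : ∀ x ∈ K, ‖A.symm (x - c)‖ ≤ R) {y : ι → ℤ} (hy : y ≠ 0) :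
    w / (2 * R) < ‖A.toContinuousLinearMap.adjoint (intVec y)‖ := by
  obtain ⟨x, hx, x', hx', hlt⟩ := hK y hy
  rw [div_lt_iff₀ (by positivity)]
  calc w < ⟪intVec y, x - x'⟫_ℝ := hlt
    _ = ⟪A.toContinuousLinearMap.adjoint (intVec y), A.symm (x - c) - A.symm (x' - c)⟫_ℝ := by
      rw [ContinuousLinearMap.adjoint_inner_left, ← map_sub, sub_sub_sub_cancel_right]
      simp
    _ ≤ ‖A.toContinuousLinearMap.adjoint (intVec y)‖ * ‖A.symm (x - c) - A.symm (x' - c)‖ :=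
      real_inner_le_norm _ _
    _ ≤ ‖A.toContinuousLinearMap.adjoint (intVec y)‖ * (2 * R) := by
      gcongr
      linarith [norm_sub_le (A.symm (x - c)) (A.symm (x' - c)), hA x hx, hA x' hx']

lemma mem_interior_of_mem_ellipsoidParams {E : Type*} [NormedAddCommGroup E] [NormedSpace ℝ E]
    {K : Set E} {A : E ≃L[ℝ] E} {c z : E} (hA : ((A : E →L[ℝ] E), c) ∈ ellipsoidParams K)
    (hz : ‖A.symm (z - c)‖ < 1) : z ∈ interior K := by
  refine mem_interior.2 ⟨{z | ‖A.symm (z - c)‖ < 1}, fun v hv => ?_,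
    isOpen_lt (by fun_prop) continuous_const, hz⟩
  simpa using hA (A.symm (v - c)) (le_of_lt hv)

lemma LatticeWidthGT.exists_add_intVec_mem_interior [Nonempty ι]
    (hwide : LatticeWidthGT ((Fintype.card ι : ℝ) ^ 2) K) (hK : Convex ℝ K) (hKc : IsCompact K)
    (hint : (interior K).Nonempty) (u : EuclideanSpace ℝ ι) :
    ∃ x : ι → ℤ, u + intVec x ∈ interior K := by
  obtain ⟨A, c, hA, hAK⟩ := exists_john_ellipsoid hK hKc hint
  rw [finrank_euclideanSpace] at hAK
  have hcard : (0 : ℝ) < Fintype.card ι := Nat.cast_pos.2 Fintype.card_pos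
  obtain ⟨x, hx⟩ := exists_norm_symm_add_intVec_lt_one (A := A) (fun y hy => by
    convert hwide.lt_norm_adjoint hcard hAK hy using 1
    field_simp) (u - c)
  exact ⟨x, mem_interior_of_mem_ellipsoidParams hA (by rwa [add_sub_right_comm])⟩

omit [Fintype ι] in
lemma isClosed_range_intVec : IsClosed (Set.range (intVec : (ι → ℤ) → EuclideanSpace ℝ ι)) := by
  have hrange : Set.range (intVec : (ι → ℤ) → EuclideanSpace ℝ ι) =
      ⋂ i, (fun v => v i) ⁻¹' Set.range ((↑) : ℤ → ℝ) := by
    ext v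
    simp only [Set.mem_range, Set.mem_iInter, Set.mem_preimage]
    rw [Classical.skolem]
    simp [PiLp.ext_iff]
  rw [hrange]
  exact isClosed_iInter fun i => Int.isClosedEmbedding_coe_real.isClosed_range.preimage
    (by fun_prop)

lemma LatticeWidthGT.exists_add_intVec_mem [Nonempty ι]
    (hwide : LatticeWidthGT ((Fintype.card ι : ℝ) ^ 2) K) (hK : Convex ℝ K) (hKc : IsCompact K)
    (u : EuclideanSpace ℝ ι) : ∃ x : ι → ℤ, u + intVec x ∈ K := by
  by_contra! hu
  have hcl : IsClosed ((fun v => u + v) '' Set.range intVec) :=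
    (Homeomorph.addLeft u).isClosed_image.2 isClosed_range_intVec
  have hdisj : Disjoint K ((fun v => u + v) '' Set.range intVec) := by
    refine Set.disjoint_right.2 ?_
    rintro _ ⟨_, ⟨x, rfl⟩, rfl⟩
    exact hu x
  obtain ⟨δ, hδ, hdisj'⟩ := hdisj.exists_cthickenings hKc hcl
  have hint : (interior (cthickening δ K)).Nonempty := hwide.nonempty.mono fun v hv =>
    interior_maximal (thickening_subset_cthickening δ K) isOpen_thickening
      (self_subset_thickening hδ K hv)
  obtain ⟨x, hx⟩ := (hwide.mono (self_subset_cthickening K)).exists_add_intVec_mem_interior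
    (hK.cthickening δ) hKc.cthickening hint u
  exact Set.disjoint_left.1 hdisj' (interior_subset hx)
    (self_subset_cthickening _ ⟨_, ⟨x, rfl⟩, rfl⟩)

lemma LatticeWidthGT.interior_nonempty [Nonempty ι]
    (hwide : LatticeWidthGT ((Fintype.card ι : ℝ) ^ 2) K) (hK : Convex ℝ K) (hKc : IsCompact K) :
    (interior K).Nonempty := by
  have hcover : ⋃ x : ι → ℤ, Homeomorph.addRight (intVec x) ⁻¹' K = Set.univ :=
    Set.eq_univ_of_forall fun u => Set.mem_iUnion.2 (hwide.exists_add_intVec_mem hK hKc u)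
  obtain ⟨x, v, hv⟩ := nonempty_interior_of_iUnion_of_closed
    (fun x => hKc.isClosed.preimage (Homeomorph.addRight (intVec x)).continuous) hcover
  rw [← Homeomorph.preimage_interior] at hv
  exact ⟨_, hv⟩

lemma interior_closure_of_convex {E : Type*} [NormedAddCommGroup E] [NormedSpace ℝ E]
    [FiniteDimensional ℝ E] {s : Set E} (hs : Convex ℝ s) : interior (closure s) = interior s := by
  rcases (interior s).eq_empty_or_nonempty with hempty | hne
  · rw [hempty, ← Set.not_nonempty_iff_eq_empty,
      hs.closure.interior_nonempty_iff_affineSpan_eq_top]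
    intro htop
    have hle : affineSpan ℝ (closure s) ≤ affineSpan ℝ s := affineSpan_le.2
      (closure_minimal (subset_affineSpan ℝ s) (affineSpan ℝ s).closed_of_finiteDimensional)
    rw [← Set.not_nonempty_iff_eq_empty, hs.interior_nonempty_iff_affineSpan_eq_top] at hempty
    exact hempty (top_le_iff.1 (htop.ge.trans hle))
  · exact hs.interior_closure_eq_interior_of_nonempty_interior hne

/-- Khinchine's flatness theorem. -/
theorem exists_inner_intVec_sub_le_sq_card [Nonempty ι] (hK : Convex ℝ K)
    (hKb : Bornology.IsBounded K) (hfree : ∀ x : ι → ℤ, intVec x ∉ interior K) :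
    ∃ y : ι → ℤ, y ≠ 0 ∧
      ∀ x ∈ K, ∀ x' ∈ K, ⟪intVec y, x - x'⟫_ℝ ≤ (Fintype.card ι : ℝ) ^ 2 := by
  by_contra! hwide
  have hwide : LatticeWidthGT ((Fintype.card ι : ℝ) ^ 2) (closure K) :=
    LatticeWidthGT.mono hwide subset_closure
  have hKc : IsCompact (closure K) := hKb.isCompact_closure
  obtain ⟨x, hx⟩ := hwide.exists_add_intVec_mem_interior hK.closure hKc
    (hwide.interior_nonempty hK.closure hKc) 0
  rw [interior_closure_of_convex hK, zero_add] at hx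
  exact hfree x hx

lemma exists_eq_smul_primitive {y : ι → ℤ} (hy : y ≠ 0) :
    ∃ (g : ℤ) (y' z : ι → ℤ), g ≠ 0 ∧ y = g • y' ∧ ∑ i, y' i * z i = 1 := by
  obtain ⟨i, hi⟩ := Function.ne_iff.1 hy
  obtain ⟨y', hy', hgcd⟩ := Finset.univ.extract_gcd y ⟨i, Finset.mem_univ i⟩
  obtain ⟨z, hz⟩ := Finset.univ.gcd_eq_sum_mul y'
  refine ⟨Finset.univ.gcd y, y', z, fun h0 => hi ?_, funext fun i => hy' i (Finset.mem_univ i), ?_⟩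
  · simp [hy' i (Finset.mem_univ i), h0]
  · rw [← hz, hgcd]

lemma exists_primitive_inner_sub_le {y : ι → ℤ} (hy : y ≠ 0)
    (hw : ∀ x ∈ K, ∀ x' ∈ K, ⟪intVec y, x - x'⟫_ℝ ≤ w) :
    ∃ y z : ι → ℤ, ∑ i, y i * z i = 1 ∧ ∀ x ∈ K, ∀ x' ∈ K, ⟪intVec y, x - x'⟫_ℝ ≤ w := by
  obtain ⟨g, y', z, hg, rfl, hz⟩ := exists_eq_smul_primitive hy
  refine ⟨y', z, hz, fun x hx x' hx' => ?_⟩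
  have hsmul (v : EuclideanSpace ℝ ι) : ⟪intVec (g • y'), v⟫_ℝ = g * ⟪intVec y', v⟫_ℝ := by
    simp [inner_intVec, Finset.mul_sum, mul_assoc]
  have hg1 : (1 : ℝ) ≤ |(g : ℝ)| := by exact_mod_cast Int.one_le_abs hg
  have habs : |⟪intVec (g • y'), x - x'⟫_ℝ| ≤ w :=
    abs_le'.2 ⟨hw x hx x' hx', by simpa [← inner_neg_right] using hw x' hx' x hx⟩
  rw [hsmul, abs_mul] at habs
  exact (le_abs_self _).trans ((le_mul_of_one_le_left (abs_nonneg _) hg1).trans habs)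

end Flatness

section LatticeQuotient

open Module

variable {ι κ μ : Type*}

/-- The inclusion `ℤ^ι → ℝ^ι` as a `ℤ`-linear map. -/
def intInclusion (ι : Type*) : (ι → ℤ) →ₗ[ℤ] (ι → ℝ) := (Algebra.linearMap ℤ ℝ).compLeft ι

@[simp] lemma intInclusion_apply (x : ι → ℤ) (i : ι) : intInclusion ι x i = x i := rfl

lemma range_intInclusion (d : ℕ) : Set.range (intInclusion (Fin d)) = intPts d := by
  ext x
  simp only [Set.mem_range, intPts, Set.mem_ofPred_eq]
  rw [Classical.skolem]
  simp [funext_iff, eq_comm]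

lemma exists_ker_eq_comp_eq_id [Finite ι] (L : Submodule ℤ (ι → ℤ))
    [IsTorsionFree ℤ ((ι → ℤ) ⧸ L)] :
    ∃ (r : ℕ) (p : (ι → ℤ) →ₗ[ℤ] (Fin r → ℤ)) (s : (Fin r → ℤ) →ₗ[ℤ] (ι → ℤ)),
      LinearMap.ker p = L ∧ p ∘ₗ s = LinearMap.id := by
  let b := finBasis ℤ ((ι → ℤ) ⧸ L)
  obtain ⟨s, hs⟩ := projective_lifting_property (b.equivFun.toLinearMap ∘ₗ L.mkQ) LinearMap.id
    (b.equivFun.surjective.comp L.mkQ_surjective)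
  exact ⟨_, _, s, by rw [LinearEquiv.ker_comp, Submodule.ker_mkQ], hs⟩

/-- The lattice points of a subspace of `ℝ^ι`. -/
def intComap (V : Submodule ℝ (ι → ℝ)) : Submodule ℤ (ι → ℤ) :=
  (V.restrictScalars ℤ).comap (intInclusion ι)

lemma isTorsionFree_quotient_intComap (V : Submodule ℝ (ι → ℝ)) :
    IsTorsionFree ℤ ((ι → ℤ) ⧸ intComap V) := by
  refine .of_smul_eq_zero fun n q hq => or_iff_not_imp_left.2 fun hn => ?_
  obtain ⟨x, rfl⟩ := (intComap V).mkQ_surjective q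
  rw [← map_smul, Submodule.mkQ_apply, Submodule.Quotient.mk_eq_zero] at hq
  rw [Submodule.mkQ_apply, Submodule.Quotient.mk_eq_zero]
  have hsmul : (n : ℝ) • intInclusion ι x ∈ V := by
    rw [Int.cast_smul_eq_zsmul, ← map_smul]
    exact hq
  exact (V.smul_mem_iff (Int.cast_ne_zero.2 hn)).1 hsmul

variable [Fintype ι] [DecidableEq ι]

/-- The extension of scalars of a map of lattices `ℤ^ι → ℤ^κ` to `ℝ^ι → ℝ^κ`, written `φ_ℝ` in
the paper. -/
def realify (f : (ι → ℤ) →ₗ[ℤ] (κ → ℤ)) : (ι → ℝ) →ₗ[ℝ] (κ → ℝ) :=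
  ((LinearMap.toMatrix' f).map (Int.castRingHom ℝ)).mulVecLin

lemma realify_intInclusion (f : (ι → ℤ) →ₗ[ℤ] (κ → ℤ)) (x : ι → ℤ) :
    realify f (intInclusion ι x) = intInclusion κ (f x) := by
  ext i
  have hf : f x i = (LinearMap.toMatrix' f).mulVec x i := by rw [LinearMap.toMatrix'_mulVec]
  rw [intInclusion_apply, hf]
  exact (RingHom.map_mulVec (Int.castRingHom ℝ) (LinearMap.toMatrix' f) x i).symm

lemma realify_id : realify (LinearMap.id : (ι → ℤ) →ₗ[ℤ] (ι → ℤ)) = LinearMap.id := by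
  simp [realify]

lemma realify_sub (f g : (ι → ℤ) →ₗ[ℤ] (κ → ℤ)) : realify (f - g) = realify f - realify g := by
  ext
  simp [realify, Matrix.map_sub]

lemma realify_comp [Fintype κ] [DecidableEq κ] (g : (κ → ℤ) →ₗ[ℤ] (μ → ℤ))
    (f : (ι → ℤ) →ₗ[ℤ] (κ → ℤ)) : realify (g ∘ₗ f) = realify g ∘ₗ realify f := by
  rw [realify, LinearMap.toMatrix'_comp, Matrix.map_mul, Matrix.mulVecLin_mul, realify, realify]

lemma realify_mem_span (f : (ι → ℤ) →ₗ[ℤ] (κ → ℤ)) (x : ι → ℝ) :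
    realify f x ∈ Submodule.span ℝ (intInclusion κ '' LinearMap.range f) := by
  rw [LinearMap.pi_apply_eq_sum_univ]
  refine Submodule.sum_smul_mem _ _ fun i _ => Submodule.subset_span
    ⟨f (Pi.single i 1), ⟨_, rfl⟩, ?_⟩
  rw [← realify_intInclusion]
  congr 1
  ext j
  simp [Pi.single_apply, eq_comm]

lemma ker_realify_of_comp_eq_id [Finite κ] {p : (ι → ℤ) →ₗ[ℤ] (κ → ℤ)}
    {s : (κ → ℤ) →ₗ[ℤ] (ι → ℤ)} (hps : p ∘ₗ s = LinearMap.id) :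
    LinearMap.ker (realify p) = Submodule.span ℝ (intInclusion ι '' LinearMap.ker p) := by
  classical
  have := Fintype.ofFinite κ
  refine le_antisymm (fun x hx => ?_) (Submodule.span_le.2 ?_)
  · have hfix : realify (LinearMap.id - s ∘ₗ p) x = x := by
      simp [realify_sub, realify_id, realify_comp, LinearMap.mem_ker.1 hx]
    have hrange : LinearMap.range (LinearMap.id - s ∘ₗ p) ≤ LinearMap.ker p := by
      rintro _ ⟨z, rfl⟩
      have hsp : p (s (p z)) = p z := LinearMap.congr_fun hps (p z)
      simp [hsp]
    rw [← hfix]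
    exact Submodule.span_mono (Set.image_mono hrange) (realify_mem_span _ x)
  · rintro _ ⟨z, hz, rfl⟩
    rw [SetLike.mem_coe, LinearMap.mem_ker, realify_intInclusion, LinearMap.mem_ker.1 hz, map_zero]

lemma exists_lattice_quotient {d : ℕ} {G : Set (Fin d → ℝ)} (hG : G ⊆ intPts d) :
    ∃ π : (Fin d → ℝ) →ₗ[ℝ] (Fin (d - finrank ℝ (Submodule.span ℝ G)) → ℝ),
      LinearMap.ker π = Submodule.span ℝ G ∧ π '' intPts d = intPts _ := by
  let L := intComap (Submodule.span ℝ G)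
  have : IsTorsionFree ℤ ((Fin d → ℤ) ⧸ L) := isTorsionFree_quotient_intComap _
  obtain ⟨r, p, s, hp, hps⟩ := exists_ker_eq_comp_eq_id L
  have hker : LinearMap.ker (realify p) = Submodule.span ℝ G := by
    rw [ker_realify_of_comp_eq_id hps, hp]
    refine le_antisymm (Submodule.span_le.2 (Set.image_subset_iff.2 fun x hx => hx))
      (Submodule.span_mono fun g hg => ?_)
    obtain ⟨x, rfl⟩ := (range_intInclusion d).ge (hG hg)
    exact ⟨x, Submodule.subset_span hg, rfl⟩
  have hright (x : Fin r → ℝ) : realify p (realify s x) = x := by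
    rw [← LinearMap.comp_apply, ← realify_comp, hps, realify_id, LinearMap.id_apply]
  obtain rfl : r = d - finrank ℝ (Submodule.span ℝ G) := by
    have hrank := (realify p).finrank_range_add_finrank_ker
    rw [LinearMap.range_eq_top.2 fun x => ⟨_, hright x⟩, hker, finrank_top] at hrank
    simp only [finrank_fin_fun] at hrank
    lia
  refine ⟨realify p, hker, ?_⟩
  rw [← range_intInclusion, ← range_intInclusion, ← Set.range_comp]
  ext x
  simp only [Set.mem_range, Function.comp_apply, realify_intInclusion]
  refine ⟨fun ⟨z, hz⟩ => ⟨p z, hz⟩, fun ⟨z, hz⟩ => ⟨s z, ?_⟩⟩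
  rw [← hz, ← LinearMap.comp_apply p s, hps, LinearMap.id_apply]

end LatticeQuotient

section ConeHull

open Filter Module

variable {V : Type*} [AddCommGroup V] [Module ℝ V]

lemma coneHull_eq_hull (s : Set V) : coneHull s = PointedCone.hull ℝ s := by
  ext x
  rw [SetLike.mem_coe, PointedCone.hull, Submodule.mem_span_set']
  constructor
  · rintro ⟨n, c, v, hc, hv, rfl⟩
    exact ⟨n, fun i => ⟨c i, hc i⟩, fun i => ⟨v i, hv i⟩, rfl⟩
  · rintro ⟨n, c, v, rfl⟩
    exact ⟨n, fun i => c i, fun i => v i, fun i => (c i).2, fun i => (v i).2, rfl⟩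

lemma convex_coneHull (s : Set V) : Convex ℝ (coneHull s) := by
  rw [coneHull_eq_hull]
  exact PointedCone.convex _

lemma smul_coneHull {t : ℝ} (ht : 0 < t) (s : Set V) : t • coneHull s = coneHull s := by
  ext x
  rw [Set.mem_smul_set_iff_inv_smul_mem₀ ht.ne', coneHull_eq_hull]
  exact PointedCone.smul_mem_iff _ (inv_pos.2 ht)

lemma span_coneHull (s : Set V) :
    Submodule.span ℝ (coneHull s) = Submodule.span ℝ s := by
  rw [coneHull_eq_hull]
  exact le_antisymm (Submodule.span_le.2 (PointedCone.hull_le_span (R := ℝ) s))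
    (Submodule.span_mono PointedCone.subset_hull)

lemma exists_eventually_add_nsmul_mem_coneHull [FiniteDimensional ℝ V] (G : Set V) :
    ∃ s ∈ AddSubmonoid.closure G, ∀ x ∈ Submodule.span ℝ G,
      ∀ᶠ k : ℕ in atTop, x + k • s ∈ coneHull G := by
  obtain ⟨T, hTG, -, hT, -⟩ := Submodule.exists_finset_span_eq_linearIndepOn ℝ G
  refine ⟨∑ g ∈ T, g, sum_mem fun g hg => AddSubmonoid.subset_closure (hTG hg), fun x hx => ?_⟩
  obtain ⟨f, -, rfl⟩ := Submodule.mem_span_finset.1 (hT.ge hx)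
  have hlarge : ∀ᶠ k : ℕ in atTop, ∀ g ∈ T, -f g ≤ k := (eventually_all_finset T).2 fun g _ =>
    tendsto_natCast_atTop_atTop.eventually (eventually_ge_atTop (-f g))
  filter_upwards [hlarge] with k hk
  rw [Finset.smul_sum, ← Finset.sum_add_distrib, coneHull_eq_hull]
  refine sum_mem fun g hg => ?_
  rw [← Nat.cast_smul_eq_nsmul ℝ, ← add_smul]
  exact PointedCone.smul_mem _ (by linarith [hk g hg]) (PointedCone.subset_hull (hTG hg))

end ConeHull

section Lifting

open Filter Module

variable {V W : Type*} [NormedAddCommGroup V] [NormedSpace ℝ V] [FiniteDimensional ℝ V]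
  [NormedAddCommGroup W] [NormedSpace ℝ W] {C G : Set V} {π : V →ₗ[ℝ] W}

/-- A simplex around `x` inside `C + ker π` is pushed into `C + coneHull G` by a translation far
into the cone. -/
lemma exists_add_mem_interior_add_coneHull (hC : Convex ℝ C)
    (hker : LinearMap.ker π ≤ Submodule.span ℝ G) {x : V} (hx : π x ∈ interior (π '' C)) :
    ∃ s ∈ AddSubmonoid.closure G, x + s ∈ interior (C + coneHull G) := by
  obtain ⟨b, hxb, hb⟩ := exists_mem_interior_convexHull_affineBasis
    (π.continuous_of_finiteDimensional.continuousAt.preimage_mem_nhds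
      (mem_interior_iff_mem_nhds.1 hx))
  obtain ⟨s, hs, hlarge⟩ := exists_eventually_add_nsmul_mem_coneHull G
  have hvertex : ∀ᶠ k : ℕ in atTop, ∀ i, b i + k • s ∈ C + coneHull G := by
    refine eventually_all.2 fun i => ?_
    obtain ⟨p, hp, hpb⟩ := hb (subset_convexHull ℝ _ ⟨i, rfl⟩)
    have hsub : b i - p ∈ Submodule.span ℝ G := hker (by simp [hpb])
    filter_upwards [hlarge _ hsub] with k hk
    exact Set.mem_add.2 ⟨p, hp, _, hk, by abel⟩
  obtain ⟨k, hk⟩ := hvertex.exists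
  have hsimplex : convexHull ℝ (Set.range b) ⊆
      Homeomorph.addRight (k • s) ⁻¹' (C + coneHull G) :=
    convexHull_min (Set.range_subset_iff.2 hk)
      ((hC.add (convex_coneHull G)).translate_preimage_left _)
  refine ⟨k • s, nsmul_mem hs k, ?_⟩
  have hxk := interior_mono hsimplex hxb
  rwa [← Homeomorph.preimage_interior] at hxk

lemma add_mem_intPts {d : ℕ} {x y : Fin d → ℝ} (hx : x ∈ intPts d) (hy : y ∈ intPts d) :
    x + y ∈ intPts d := fun i =>
  let ⟨m, hm⟩ := hx i
  let ⟨n, hn⟩ := hy i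
  ⟨m + n, by simp [hm, hn]⟩

lemma mem_intPts_of_mem_closure {d : ℕ} {G : Set (Fin d → ℝ)} (hG : G ⊆ intPts d)
    {s : Fin d → ℝ} (hs : s ∈ AddSubmonoid.closure G) : s ∈ intPts d :=
  AddSubmonoid.closure_induction (fun _ hx => hG hx) (fun _ => ⟨0, by simp⟩)
    (fun _ _ _ _ => add_mem_intPts) hs

lemma image_intPts_inter_interior_image_eq_empty {d : ℕ} {C G : Set (Fin d → ℝ)}
    {π : (Fin d → ℝ) →ₗ[ℝ] W} (hC : Convex ℝ C) (hG : G ⊆ intPts d)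
    (hker : LinearMap.ker π ≤ Submodule.span ℝ G)
    (hfree : intPts d ∩ interior (C + coneHull G) = ∅) :
    π '' intPts d ∩ interior (π '' C) = ∅ := by
  rw [Set.eq_empty_iff_forall_notMem] at hfree ⊢
  rintro _ ⟨⟨x, hx, rfl⟩, hxC⟩
  obtain ⟨s, hs, hxs⟩ := exists_add_mem_interior_add_coneHull hC hker hxC
  exact hfree _ ⟨add_mem_intPts hx (mem_intPts_of_mem_closure hG hs), hxs⟩

end Lifting

section PrimitiveFunctional

open scoped InnerProductSpace

lemma exists_image_intPts_eq_range_sub_le {d : ℕ} (hd : 1 ≤ d) {K : Set (Fin d → ℝ)}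
    (hK : Convex ℝ K) (hKb : Bornology.IsBounded K) (hfree : intPts d ∩ interior K = ∅) :
    ∃ ψ : (Fin d → ℝ) →ₗ[ℝ] ℝ, ψ '' intPts d = Set.range ((↑) : ℤ → ℝ) ∧
      ∀ x ∈ K, ∀ x' ∈ K, ψ x - ψ x' ≤ (d : ℝ) ^ 2 := by
  have : Nonempty (Fin d) := ⟨⟨0, hd⟩⟩
  let e := EuclideanSpace.equiv (Fin d) ℝ
  have hfree' (x : Fin d → ℤ) : intVec x ∉ interior (e ⁻¹' K) := fun hx => by
    have hxK : e.toHomeomorph (intVec x) ∈ interior K := by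
      rwa [← Set.mem_preimage, e.toHomeomorph.preimage_interior]
    exact Set.eq_empty_iff_forall_notMem.1 hfree _ ⟨fun i => ⟨x i, rfl⟩, hxK⟩
  have hKb' : Bornology.IsBounded (e ⁻¹' K) := by
    rw [← e.image_symm_eq_preimage]
    exact e.symm.lipschitz.isBounded_image hKb
  obtain ⟨y, hy, hw⟩ :=
    exists_inner_intVec_sub_le_sq_card (hK.linear_preimage e.toLinearMap) hKb' hfree'
  obtain ⟨y, z, hyz, hw⟩ := exists_primitive_inner_sub_le hy hw
  have hψ (x : Fin d → ℤ) : ⟪intVec y, intVec x⟫_ℝ = (∑ i, y i * x i : ℤ) := by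
    simp [inner_intVec]
  refine ⟨(innerSL ℝ (intVec y)).toLinearMap ∘ₗ e.symm.toLinearMap, ?_, fun x hx x' hx' => ?_⟩
  · rw [← range_intInclusion, ← Set.range_comp]
    refine subset_antisymm ?_ ?_
    · rintro _ ⟨x, rfl⟩
      exact ⟨_, (hψ x).symm⟩
    · rintro _ ⟨n, rfl⟩
      refine ⟨n • z, (hψ _).trans ?_⟩
      simp [mul_left_comm _ n, ← Finset.mul_sum, hyz]
  · simpa [inner_sub_right] using hw (e.symm x) (by simpa using hx) (e.symm x') (by simpa using hx')

lemma exists_subset_Icc_add {S : Set ℝ} {c : ℝ} (hS : ∀ x ∈ S, ∀ x' ∈ S, x - x' ≤ c) :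
    ∃ m, S ⊆ Set.Icc m (m + c) := by
  rcases S.eq_empty_or_nonempty with rfl | hne
  · simp
  · refine ⟨sInf S, fun x hx => ⟨csInf_le ⟨x - c, fun x' hx' => ?_⟩ hx, ?_⟩⟩
    · linarith [hS x hx x' hx']
    · exact sub_le_iff_le_add.1 (le_csInf hne fun x' hx' => by linarith [hS x hx x' hx'])

end PrimitiveFunctional

theorem stmt_6_general {d : ℕ} {C G : Set (Fin d → ℝ)} (hC : Convex ℝ C)
    (hCb : Bornology.IsBounded C) (hG : G ⊆ intPts d) {l : ℕ}
    (hl : l = d - Module.finrank ℝ (Submodule.span ℝ (coneHull G))) (hl1 : 1 ≤ l)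
    {t : ℝ} (ht : 0 < t) (hdisj : intPts d ∩ interior (t • (C + coneHull G)) = ∅) :
    ∃ φ : (Fin d → ℝ) →ₗ[ℝ] ℝ,
      (∀ x ∈ intPts d, ∃ n : ℤ, φ x = n) ∧ (∀ n : ℤ, ∃ x ∈ intPts d, φ x = n) ∧
      ∃ m M : ℝ, (∀ u ∈ C + coneHull G, φ u ∈ Set.Icc m M) ∧ M - m ≤ (l : ℝ) ^ 2 / t := by
  have hquotient := exists_lattice_quotient hG
  rw [← span_coneHull G, ← hl] at hquotient
  obtain ⟨π, hker, hπ⟩ := hquotient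
  have hfree := image_intPts_inter_interior_image_eq_empty (hC.smul t) hG
    (hker.trans (span_coneHull G)).le (by rwa [← smul_coneHull ht G, ← smul_add])
  rw [hπ] at hfree
  obtain ⟨ψ, hψ, hwidth⟩ := exists_image_intPts_eq_range_sub_le hl1 ((hC.smul t).linear_image π)
    (π.toContinuousLinearMap.lipschitz.isBounded_image (hCb.smul₀ t)) hfree
  have himage : (ψ ∘ₗ π) '' intPts d = Set.range ((↑) : ℤ → ℝ) := by
    rw [LinearMap.coe_comp, Set.image_comp, hπ, hψ]
  have hcone {s} (hs : s ∈ coneHull G) : π s = 0 :=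
    LinearMap.mem_ker.1 (hker.ge (Submodule.subset_span hs))
  have hwidthU : ∀ x ∈ (ψ ∘ₗ π) '' (C + coneHull G), ∀ x' ∈ (ψ ∘ₗ π) '' (C + coneHull G),
      x - x' ≤ (l : ℝ) ^ 2 / t := by
    rintro _ ⟨_, ⟨p, hp, s, hs, rfl⟩, rfl⟩ _ ⟨_, ⟨p', hp', s', hs', rfl⟩, rfl⟩
    have hpp' := hwidth _ ⟨_, Set.smul_mem_smul_set hp, rfl⟩ _ ⟨_, Set.smul_mem_smul_set hp', rfl⟩
    rw [le_div_iff₀ ht, mul_comm, mul_sub]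
    simpa [hcone hs, hcone hs'] using hpp'
  obtain ⟨m, hm⟩ := exists_subset_Icc_add hwidthU
  exact ⟨ψ ∘ₗ π, fun x hx => (himage.le ⟨x, hx, rfl⟩).imp fun _ => Eq.symm,
    fun n => himage.ge ⟨n, rfl⟩, m, _, fun u hu => hm ⟨u, hu, rfl⟩, (add_sub_cancel_left m _).le⟩

/-- Let `N` be a lattice of rank `d` (modelled as `ℤ^d ⊆ ℝ^d`) and `U = conv(F) + σ₀`,
where `F` is finite and `σ₀` is the convex cone generated by a finite set `G` of lattice
points. Let `l = d - dim(σ₀ - σ₀) ≥ 1`, let `t > 0`, and suppose `N ∩ int(tU) = ∅`.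
Then there exists a surjective `ℤ`-linear map `φ : N → ℤ` (modelled by its realification,
integer-valued on lattice points and surjective onto `ℤ`) such that `φ_ℝ(U)` is a bounded
interval of length at most `l²/t`. -/
theorem stmt_6 (d : ℕ) (F G : Finset (Fin d → ℝ))
    (hG : (G : Set (Fin d → ℝ)) ⊆ intPts d)
    (U : Set (Fin d → ℝ))
    (hU : U = {x | ∃ p ∈ convexHull ℝ (F : Set (Fin d → ℝ)),
      ∃ s ∈ coneHull (G : Set (Fin d → ℝ)), x = p + s})
    (l : ℕ)
    (hl : l = d - Module.finrank ℝ
      (Submodule.span ℝ (coneHull (G : Set (Fin d → ℝ)))))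
    (hl1 : 1 ≤ l)
    (t : ℝ) (ht : 0 < t)
    (hdisj : intPts d ∩ interior (t • U) = ∅) :
    ∃ φ : (Fin d → ℝ) →ₗ[ℝ] ℝ,
      (∀ x ∈ intPts d, ∃ n : ℤ, φ x = (n : ℝ)) ∧
      (∀ n : ℤ, ∃ x ∈ intPts d, φ x = (n : ℝ)) ∧
      ∃ m M : ℝ, (∀ u ∈ U, φ u ∈ Set.Icc m M) ∧ M - m ≤ (l : ℝ) ^ 2 / t := by
  have hU' : U = convexHull ℝ (F : Set (Fin d → ℝ)) + coneHull (G : Set (Fin d → ℝ)) := by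
    ext x
    simp [hU, Set.mem_add, eq_comm]
  subst hU'
  exact stmt_6_general (convex_convexHull ℝ _)
    (F.finite_toSet.isCompact_convexHull (𝕜 := ℝ)).isBounded hG hl hl1 ht hdisj
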